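/- Let $K\subseteq\mathbb{R}^m$ be a nonempty closed convex cone with dual cone $K^*=\{y:\langle y,s\rangle\ge 0\ \forall s\in K\}$, let $d_K$ be the Euclidean distance to $K$ and $\Pi_K$ the Euclidean projection onto $K$. Let $A:\mathbb{R}^n\to\mathbb{R}^m$ be linear, $b\in\mathbb{R}^m$, let $\chi\subseteq\mathbb{R}^n$ be compact and convex, and let $p:\chi\to\mathbb{R}$ be convex and lower semicontinuous (for instance the restriction to $\chi$ of a finite convex function on $\mathbb{R}^n$). Assume that the conic program $$(P):\qquad \min\{p(x): Ax-b\in K,\ x\in\chi\}$$ is feasible, let $p^*$ be its optimal value, and let $y^*$ be a KKT point of $(P)$, that is, $y^*\in K^*$ and $\inf_{x\in\chi}\{p(x)-\langle y^*,Ax-b\rangle\}=p^*$. For $\mu>0$ put $$L_\mu(x,y)=p(x)+\tfrac{\mu}{2}\,d_K\!\left(Ax-b-\tfrac{y}{\mu}\right)^2-\tfrac{\|y\|_2^2}{2\mu},\qquad g_\mu(y)=\inf_{x\in\chi}L_\mu(x,y).$$ Let $\{\mu_k\}_{k\ge1}\subset(0,\infty)$ and $\{\xi_k\}_{k\ge1}\subset[0,\infty)$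 satisfy $B:=\sum_{k=1}^\infty\sqrt{2\xi_k\mu_k}<\infty$. Let $\{x_k\}_{k\ge1}\subseteq\chi$, and define $y_1=0$ and $$y_{k+1}=\mu_k\left(\Pi_K\!\left(Ax_k-b-\tfrac{y_k}{\mu_k}\right)-\left(Ax_k-b-\tfrac{y_k}{\mu_k}\right)\right),\qquad k\ge1.$$ If $L_{\mu_k}(x_k,y_k)\le g_{\mu_k}(y_k)+\xi_k$ for all $k\ge1$, then for all $k\ge1$ $$\|y_k-y^*\|_2\le B+\|y^*\|_2,\qquad\text{and hence}\qquad \|y_k\|_2\le B+2\|y^*\|_2 .$$ -/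

import Mathlib

open RealInnerProductSpace

/-- The dual cone `K* = {y : ⟪y, s⟫ ≥ 0 for all s ∈ K}`. -/
def dualCone {m : ℕ} (K : Set (EuclideanSpace ℝ (Fin m))) :
    Set (EuclideanSpace ℝ (Fin m)) :=
  {y | ∀ s ∈ K, 0 ≤ ⟪y, s⟫}

open Classical in
/-- The Euclidean projection `Π_K(v)`: the point of `K` nearest to `v`. It exists and is unique
for nonempty closed convex `K` (see `projK_spec` and `projK_unique`); where no nearest point
exists the value is `0`. -/
noncomputable def projK {m : ℕ} (K : Set (EuclideanSpace ℝ (Fin m)))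
    (v : EuclideanSpace ℝ (Fin m)) : EuclideanSpace ℝ (Fin m) :=
  if h : ∃ s ∈ K, ∀ t ∈ K, ‖v - s‖ ≤ ‖v - t‖ then h.choose else 0

theorem projK_spec {m : ℕ} {K : Set (EuclideanSpace ℝ (Fin m))} (hne : K.Nonempty)
    (hcl : IsClosed K) (v : EuclideanSpace ℝ (Fin m)) :
    projK K v ∈ K ∧ ∀ t ∈ K, ‖v - projK K v‖ ≤ ‖v - t‖ := by
  have h : ∃ s ∈ K, ∀ t ∈ K, ‖v - s‖ ≤ ‖v - t‖ := by
    obtain ⟨s, hs, hd⟩ := hcl.exists_infDist_eq_dist hne v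
    refine ⟨s, hs, fun t ht => ?_⟩
    rw [← dist_eq_norm, ← dist_eq_norm, ← hd]
    exact Metric.infDist_le_dist_of_mem ht
  unfold projK
  rw [dif_pos h]
  exact h.choose_spec

theorem projK_unique {m : ℕ} {K : Set (EuclideanSpace ℝ (Fin m))} (hne : K.Nonempty)
    (hcl : IsClosed K) (hcv : Convex ℝ K) (v s : EuclideanSpace ℝ (Fin m)) (hs : s ∈ K)
    (hmin : ∀ t ∈ K, ‖v - s‖ ≤ ‖v - t‖) : s = projK K v := by
  obtain ⟨hp, hpmin⟩ := projK_spec hne hcl v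
  have hmid := hmin _ (hcv hs hp (by norm_num : (0 : ℝ) ≤ 1 / 2)
    (by norm_num : (0 : ℝ) ≤ 1 / 2) (by norm_num))
  have heq : ‖v - s‖ = ‖v - projK K v‖ := le_antisymm (hmin _ hp) (hpmin _ hs)
  have hpar := parallelogram_law_with_norm ℝ (v - s) (v - projK K v)
  have h1 : v - ((1 / 2 : ℝ) • s + (1 / 2 : ℝ) • projK K v)
      = (1 / 2 : ℝ) • ((v - s) + (v - projK K v)) := by module
  have h2 : (v - s) - (v - projK K v) = projK K v - s := by abel
  rw [h1, norm_smul, Real.norm_of_nonneg (by norm_num : (0 : ℝ) ≤ 1 / 2)] at hmid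
  rw [h2, ← heq] at hpar
  have h0 : ‖projK K v - s‖ = 0 := by
    nlinarith [norm_nonneg (projK K v - s), norm_nonneg (v - s)]
  exact (sub_eq_zero.mp (norm_eq_zero.mp h0)).symm

/-- The penalty Lagrangian
`L_μ(x, y) = p(x) + (μ/2)·d_K(Ax - b - y/μ)² - ‖y‖²/(2μ)`. -/
noncomputable def Lpen {n m : ℕ}
    (A : EuclideanSpace ℝ (Fin n) →ₗ[ℝ] EuclideanSpace ℝ (Fin m))
    (b : EuclideanSpace ℝ (Fin m)) (K : Set (EuclideanSpace ℝ (Fin m)))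
    (p : EuclideanSpace ℝ (Fin n) → ℝ) (μ : ℝ)
    (x : EuclideanSpace ℝ (Fin n)) (y : EuclideanSpace ℝ (Fin m)) : ℝ :=
  p x + μ / 2 * (Metric.infDist (A x - b - μ⁻¹ • y) K) ^ 2 - ‖y‖ ^ 2 / (2 * μ)

/-- `g_μ(y) = inf_{x ∈ χ} L_μ(x, y)`. -/
noncomputable def gmu {n m : ℕ}
    (A : EuclideanSpace ℝ (Fin n) →ₗ[ℝ] EuclideanSpace ℝ (Fin m))
    (b : EuclideanSpace ℝ (Fin m)) (K : Set (EuclideanSpace ℝ (Fin m)))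
    (χ : Set (EuclideanSpace ℝ (Fin n)))
    (p : EuclideanSpace ℝ (Fin n) → ℝ) (μ : ℝ) (y : EuclideanSpace ℝ (Fin m)) : ℝ :=
  sInf ((fun x => Lpen A b K p μ x y) '' χ)

/-- The Lagrangian dual function `g₀(z) = inf_{x ∈ χ} { p(x) - ⟪z, Ax - b⟫ }`. -/
noncomputable def gzero {n m : ℕ}
    (A : EuclideanSpace ℝ (Fin n) →ₗ[ℝ] EuclideanSpace ℝ (Fin m))
    (b : EuclideanSpace ℝ (Fin m)) (χ : Set (EuclideanSpace ℝ (Fin n)))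
    (p : EuclideanSpace ℝ (Fin n) → ℝ) (z : EuclideanSpace ℝ (Fin m)) : ℝ :=
  sInf ((fun x => p x - ⟪z, A x - b⟫) '' χ)

/-- The optimal value `p* = inf { p(x) : x ∈ χ, Ax - b ∈ K }` of the conic program. -/
noncomputable def pstar {n m : ℕ}
    (A : EuclideanSpace ℝ (Fin n) →ₗ[ℝ] EuclideanSpace ℝ (Fin m))
    (b : EuclideanSpace ℝ (Fin m)) (K : Set (EuclideanSpace ℝ (Fin m)))
    (χ : Set (EuclideanSpace ℝ (Fin n)))
    (p : EuclideanSpace ℝ (Fin n) → ℝ) : ℝ :=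
  sInf (p '' {x ∈ χ | A x - b ∈ K})

/-- A KKT point of the conic program: `y ∈ K*` with `g₀(y) = p*`. -/
def IsKKTPoint {n m : ℕ}
    (A : EuclideanSpace ℝ (Fin n) →ₗ[ℝ] EuclideanSpace ℝ (Fin m))
    (b : EuclideanSpace ℝ (Fin m)) (K : Set (EuclideanSpace ℝ (Fin m)))
    (χ : Set (EuclideanSpace ℝ (Fin n)))
    (p : EuclideanSpace ℝ (Fin n) → ℝ) (y : EuclideanSpace ℝ (Fin m)) : Prop :=
  y ∈ dualCone K ∧ gzero A b χ p y = pstar A b K χ p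

open RealInnerProductSpace

section Projection

variable {m : ℕ} {K : Set (EuclideanSpace ℝ (Fin m))}

theorem infDist_eq_norm_projK_sub (hne : K.Nonempty) (hcl : IsClosed K)
    (w : EuclideanSpace ℝ (Fin m)) : Metric.infDist w K = ‖projK K w - w‖ := by
  obtain ⟨hp, hmin⟩ := projK_spec hne hcl w
  rw [norm_sub_rev]
  apply le_antisymm
  · rw [← dist_eq_norm]
    exact Metric.infDist_le_dist_of_mem hp
  · refine (Metric.le_infDist hne).2 fun t ht => ?_
    rw [dist_eq_norm]
    exact hmin t ht

/-- The variational inequality characterizing the projection. -/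
theorem inner_projK_sub_nonneg (hne : K.Nonempty) (hcl : IsClosed K) (hcv : Convex ℝ K)
    (w : EuclideanSpace ℝ (Fin m)) {t : EuclideanSpace ℝ (Fin m)} (ht : t ∈ K) :
    0 ≤ ⟪projK K w - w, t - projK K w⟫ := by
  obtain ⟨hp, hmin⟩ := projK_spec hne hcl w
  have hinf : ‖w - projK K w‖ = ⨅ s : K, ‖w - s‖ := by
    have : Nonempty K := hne.to_subtype
    apply le_antisymm
    · exact le_ciInf fun s => hmin s s.2
    · exact ciInf_le (f := fun s : K => ‖w - s‖)
        ⟨0, by rintro _ ⟨s, rfl⟩; exact norm_nonneg _⟩ ⟨projK K w, hp⟩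
  have h := (norm_eq_iInf_iff_real_inner_le_zero hcv hp).1 hinf t ht
  rw [← neg_sub w, inner_neg_left]
  linarith

theorem inner_projK_sub_projK (hne : K.Nonempty) (hcl : IsClosed K) (hcv : Convex ℝ K)
    (hcone : ∀ c : ℝ, 0 < c → ∀ s ∈ K, c • s ∈ K) (w : EuclideanSpace ℝ (Fin m)) :
    ⟪projK K w - w, projK K w⟫ = 0 := by
  have hp := (projK_spec hne hcl w).1
  have h1 := inner_projK_sub_nonneg hne hcl hcv w (hcone 2 (by norm_num) _ hp)
  have h2 := inner_projK_sub_nonneg hne hcl hcv w (hcone (1 / 2) (by norm_num) _ hp)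
  rw [inner_sub_right, inner_smul_right] at h1 h2
  linarith

theorem projK_sub_mem_dualCone (hne : K.Nonempty) (hcl : IsClosed K) (hcv : Convex ℝ K)
    (hcone : ∀ c : ℝ, 0 < c → ∀ s ∈ K, c • s ∈ K) (w : EuclideanSpace ℝ (Fin m)) :
    projK K w - w ∈ dualCone K := by
  intro t ht
  have hp := (projK_spec hne hcl w).1
  have hmem : projK K w + t ∈ K := by
    have h := hcone 2 (by norm_num) _ (hcv hp ht (by norm_num : (0 : ℝ) ≤ 1 / 2)
      (by norm_num : (0 : ℝ) ≤ 1 / 2) (by norm_num))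
    convert h using 1
    module
  simpa using inner_projK_sub_nonneg hne hcl hcv w hmem

/-- Strengthened gradient inequality for the half squared distance to `K`. -/
theorem half_sq_infDist_ge (hne : K.Nonempty) (hcl : IsClosed K) (hcv : Convex ℝ K)
    (w v : EuclideanSpace ℝ (Fin m)) :
    Metric.infDist v K ^ 2 / 2 - ⟪projK K v - v, w - v⟫
      + ‖(projK K w - w) - (projK K v - v)‖ ^ 2 / 2 ≤ Metric.infDist w K ^ 2 / 2 := by
  rw [infDist_eq_norm_projK_sub hne hcl, infDist_eq_norm_projK_sub hne hcl]
  have h := inner_projK_sub_nonneg hne hcl hcv v (projK_spec hne hcl w).1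
  have e : projK K w - projK K v
      = ((projK K w - w) - (projK K v - v)) + (w - v) := by abel
  rw [e, inner_add_right, inner_sub_right, real_inner_self_eq_norm_sq] at h
  have h2 := norm_sub_sq_real (projK K w - w) (projK K v - v)
  rw [real_inner_comm] at h2
  linarith

/-- Quadratic upper bound for the squared distance to `K`. -/
theorem sq_infDist_add_le (hne : K.Nonempty) (hcl : IsClosed K)
    (v h : EuclideanSpace ℝ (Fin m)) :
    Metric.infDist (v + h) K ^ 2
      ≤ Metric.infDist v K ^ 2 - 2 * ⟪projK K v - v, h⟫ + ‖h‖ ^ 2 := by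
  have h1 : Metric.infDist (v + h) K ≤ ‖(projK K v - v) - h‖ := by
    have := Metric.infDist_le_dist_of_mem (x := v + h) (projK_spec hne hcl v).1
    rwa [dist_comm, dist_eq_norm, ← sub_sub] at this
  rw [infDist_eq_norm_projK_sub hne hcl v, ← norm_sub_sq_real]
  exact pow_le_pow_left₀ Metric.infDist_nonneg h1 2

end Projection

theorem nonneg_of_forall_add_mul_nonneg {a c : ℝ}
    (h : ∀ t : ℝ, 0 < t → t ≤ 1 → 0 ≤ t * a + t ^ 2 * c) : 0 ≤ a := by
  by_contra! ha
  have hd : 0 < |c| + |a| := add_pos_of_nonneg_of_pos (abs_nonneg c) (abs_pos.2 ha.ne)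
  have ht : 0 < -a / (2 * (|c| + |a|)) := by apply div_pos <;> linarith
  set t := -a / (2 * (|c| + |a|)) with htdef
  have hmul : t * (2 * (|c| + |a|)) = -a := div_mul_cancel₀ _ (by positivity)
  have habs : |a| = -a := abs_of_neg ha
  have h1 : t ≤ 1 := by
    rw [htdef, div_le_one (by positivity)]
    linarith [abs_nonneg c]
  have h2 := h t ht h1
  have h3 : 0 ≤ a + t * c := by
    refine nonneg_of_mul_nonneg_right (b := a + t * c) (a := t) ?_ ht
    linarith
  have h4 : t * c ≤ t * |c| := mul_le_mul_of_nonneg_left (le_abs_self c) ht.le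
  have h5 : 0 ≤ t * |a| := by positivity
  linarith

section Lagrangian

variable {n m : ℕ} {K : Set (EuclideanSpace ℝ (Fin m))}
  {A : EuclideanSpace ℝ (Fin n) →ₗ[ℝ] EuclideanSpace ℝ (Fin m)}
  {b : EuclideanSpace ℝ (Fin m)} {χ : Set (EuclideanSpace ℝ (Fin n))}
  {p : EuclideanSpace ℝ (Fin n) → ℝ}

/-- The multiplier update of the augmented Lagrangian method. -/
noncomputable def multiplierUpdate
    (A : EuclideanSpace ℝ (Fin n) →ₗ[ℝ] EuclideanSpace ℝ (Fin m))
    (b : EuclideanSpace ℝ (Fin m)) (K : Set (EuclideanSpace ℝ (Fin m))) (μ : ℝ)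
    (x : EuclideanSpace ℝ (Fin n)) (y : EuclideanSpace ℝ (Fin m)) :
    EuclideanSpace ℝ (Fin m) :=
  μ • (projK K (A x - b - μ⁻¹ • y) - (A x - b - μ⁻¹ • y))

theorem continuous_Lpen_sub (μ : ℝ) (y : EuclideanSpace ℝ (Fin m)) :
    Continuous fun x => μ / 2 * (Metric.infDist (A x - b - μ⁻¹ • y) K) ^ 2
      - ‖y‖ ^ 2 / (2 * μ) := by
  have hA : Continuous A := A.continuous_of_finiteDimensional
  have hd : Continuous fun x => Metric.infDist (A x - b - μ⁻¹ • y) K :=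
    (Metric.continuous_infDist_pt K).comp ((hA.sub continuous_const).sub continuous_const)
  exact ((hd.pow 2).const_mul _).sub continuous_const

theorem exists_isMinOn_Lpen (hχ : IsCompact χ) (hne : χ.Nonempty)
    (hp : LowerSemicontinuousOn p χ) (μ : ℝ) (y : EuclideanSpace ℝ (Fin m)) :
    ∃ x ∈ χ, IsMinOn (fun x => Lpen A b K p μ x y) χ x := by
  have h := hp.add
    (continuous_Lpen_sub (A := A) (b := b) (K := K) μ y).continuousOn.lowerSemicontinuousOn
  simpa only [Lpen, add_sub_assoc] using h.exists_isMinOn hne hχ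

theorem bddBelow_gzero (hχ : IsCompact χ) (hp : LowerSemicontinuousOn p χ)
    (z : EuclideanSpace ℝ (Fin m)) :
    BddBelow ((fun x => p x - ⟪z, A x - b⟫) '' χ) := by
  have hA : Continuous A := A.continuous_of_finiteDimensional
  have hc : Continuous fun x => -⟪z, A x - b⟫ := by fun_prop
  simpa only [sub_eq_add_neg] using
    (hp.add hc.continuousOn.lowerSemicontinuousOn).bddBelow_of_isCompact hχ

/-- First-order optimality of a minimizer of the penalty Lagrangian. -/
theorem IsMinOn.le_sub_inner_multiplierUpdate (hne : K.Nonempty) (hcl : IsClosed K)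
    (hp : ConvexOn ℝ χ p) {μ : ℝ} (hμ : 0 < μ) {y : EuclideanSpace ℝ (Fin m)}
    {u x : EuclideanSpace ℝ (Fin n)} (hu : u ∈ χ) (hx : x ∈ χ)
    (hmin : IsMinOn (fun x => Lpen A b K p μ x y) χ u) :
    p u ≤ p x - ⟪multiplierUpdate A b K μ u y, A x - A u⟫ := by
  rw [← sub_nonneg]
  refine nonneg_of_forall_add_mul_nonneg (c := μ / 2 * ‖A x - A u‖ ^ 2) fun t ht ht1 => ?_
  have hmem : (1 - t) • u + t • x ∈ χ := hp.1 hu hx (by linarith) ht.le (by ring)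
  have hpt : p ((1 - t) • u + t • x) ≤ (1 - t) * p u + t * p x :=
    hp.2 hu hx (by linarith) ht.le (by ring)
  have hm := isMinOn_iff.1 hmin _ hmem
  have hd := sq_infDist_add_le hne hcl (A u - b - μ⁻¹ • y) (t • (A x - A u))
  have e : A ((1 - t) • u + t • x) - b - μ⁻¹ • y
      = (A u - b - μ⁻¹ • y) + t • (A x - A u) := by
    rw [map_add, map_smul, map_smul]
    module
  simp only [Lpen] at hm
  rw [e] at hm
  rw [inner_smul_right, norm_smul, mul_pow, Real.norm_eq_abs, sq_abs] at hd
  have hd' := mul_le_mul_of_nonneg_left hd (half_pos hμ).le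
  rw [multiplierUpdate, real_inner_smul_left]
  linarith

/-- Quadratic growth of the penalty Lagrangian in terms of the multiplier update. -/
theorem IsMinOn.Lpen_add_sq_le (hne : K.Nonempty) (hcl : IsClosed K) (hcv : Convex ℝ K)
    (hp : ConvexOn ℝ χ p) {μ : ℝ} (hμ : 0 < μ) {y : EuclideanSpace ℝ (Fin m)}
    {u x : EuclideanSpace ℝ (Fin n)} (hu : u ∈ χ) (hx : x ∈ χ)
    (hmin : IsMinOn (fun x => Lpen A b K p μ x y) χ u) :
    Lpen A b K p μ u y
      + ‖multiplierUpdate A b K μ x y - multiplierUpdate A b K μ u y‖ ^ 2 / (2 * μ)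
      ≤ Lpen A b K p μ x y := by
  have h1 := hmin.le_sub_inner_multiplierUpdate hne hcl hp hμ hu hx
  have h2 := mul_le_mul_of_nonneg_left
    (half_sq_infDist_ge hne hcl hcv (A x - b - μ⁻¹ • y) (A u - b - μ⁻¹ • y)) hμ.le
  have e : A x - b - μ⁻¹ • y - (A u - b - μ⁻¹ • y) = A x - A u := by abel
  rw [e] at h2
  rw [multiplierUpdate, real_inner_smul_left] at h1
  rw [multiplierUpdate, multiplierUpdate, ← smul_sub, norm_smul, mul_pow, Real.norm_eq_abs,
    sq_abs]
  simp only [Lpen]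
  set N := ‖projK K (A x - b - μ⁻¹ • y) - (A x - b - μ⁻¹ • y)
    - (projK K (A u - b - μ⁻¹ • y) - (A u - b - μ⁻¹ • y))‖
  have e2 : μ ^ 2 * N ^ 2 / (2 * μ) = μ * (N ^ 2 / 2) := by field_simp
  rw [e2]
  linarith

/-- The exact multiplier update does not increase the distance to a KKT point. -/
theorem IsMinOn.norm_multiplierUpdate_sub_le (hne : K.Nonempty) (hcl : IsClosed K)
    (hcv : Convex ℝ K) (hcone : ∀ c : ℝ, 0 < c → ∀ s ∈ K, c • s ∈ K) (hχ : IsCompact χ)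
    (hp : ConvexOn ℝ χ p) (hlsc : LowerSemicontinuousOn p χ)
    (hfeas : {x ∈ χ | A x - b ∈ K}.Nonempty)
    {z : EuclideanSpace ℝ (Fin m)} (hz : IsKKTPoint A b K χ p z)
    {μ : ℝ} (hμ : 0 < μ) {y : EuclideanSpace ℝ (Fin m)}
    {u : EuclideanSpace ℝ (Fin n)} (hu : u ∈ χ)
    (hmin : IsMinOn (fun x => Lpen A b K p μ x y) χ u) :
    ‖multiplierUpdate A b K μ u y - z‖ ≤ ‖y - z‖ := by
  set q := multiplierUpdate A b K μ u y with hq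
  set w := A u - b - μ⁻¹ • y with hw
  have hqw : q = μ • (projK K w - w) := rfl
  have hweak : p u - ⟪q, A u - b⟫ ≤ pstar A b K χ p := by
    refine le_csInf (hfeas.image p) ?_
    rintro _ ⟨x, ⟨hx, hxK⟩, rfl⟩
    have h1 := hmin.le_sub_inner_multiplierUpdate hne hcl hp hμ hu hx
    have h2 : 0 ≤ ⟪q, A x - b⟫ := by
      rw [hqw, real_inner_smul_left]
      exact mul_nonneg hμ.le (projK_sub_mem_dualCone hne hcl hcv hcone w _ hxK)
    have e : A x - A u = (A x - b) - (A u - b) := by abel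
    rw [← hq, e, inner_sub_right] at h1
    linarith
  have hdual : pstar A b K χ p ≤ p u - ⟪z, A u - b⟫ := by
    rw [← hz.2]
    exact csInf_le (bddBelow_gzero hχ hlsc z) ⟨u, hu, rfl⟩
  have horth : ⟪q, projK K w⟫ = 0 := by
    rw [hqw, real_inner_smul_left, inner_projK_sub_projK hne hcl hcv hcone, mul_zero]
  have hzs := hz.1 _ (projK_spec hne hcl w).1
  have hv : A u - b = projK K w + μ⁻¹ • (y - q) := by
    rw [hqw, smul_sub, smul_smul, inv_mul_cancel₀ hμ.ne', one_smul, hw]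
    abel
  have hmono : 0 ≤ ⟪q - z, y - q⟫ := by
    have h1 : 0 ≤ ⟪q - z, A u - b⟫ := by
      rw [inner_sub_left]
      linarith
    rw [hv, inner_add_right, inner_smul_right, inner_sub_left, horth] at h1
    refine nonneg_of_mul_nonneg_right (a := μ⁻¹) ?_ (inv_pos.2 hμ)
    linarith
  have e : y - z = (q - z) + (y - q) := by abel
  have hexp := norm_add_sq_real (q - z) (y - q)
  rw [← e] at hexp
  refine (sq_le_sq₀ (norm_nonneg _) (norm_nonneg _)).1 ?_
  linarith [sq_nonneg ‖y - q‖]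

/-- One inexact step increases the distance to a KKT point by at most `√(2ξμ)`. -/
theorem norm_multiplierUpdate_sub_le_add_sqrt (hne : K.Nonempty) (hcl : IsClosed K)
    (hcv : Convex ℝ K) (hcone : ∀ c : ℝ, 0 < c → ∀ s ∈ K, c • s ∈ K) (hχ : IsCompact χ)
    (hp : ConvexOn ℝ χ p) (hlsc : LowerSemicontinuousOn p χ)
    (hfeas : {x ∈ χ | A x - b ∈ K}.Nonempty)
    {z : EuclideanSpace ℝ (Fin m)} (hz : IsKKTPoint A b K χ p z)
    {μ ξ : ℝ} (hμ : 0 < μ) {y : EuclideanSpace ℝ (Fin m)}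
    {x : EuclideanSpace ℝ (Fin n)} (hx : x ∈ χ)
    (hL : Lpen A b K p μ x y ≤ gmu A b K χ p μ y + ξ) :
    ‖multiplierUpdate A b K μ x y - z‖ ≤ √(2 * ξ * μ) + ‖y - z‖ := by
  obtain ⟨u, hu, hmin⟩ := exists_isMinOn_Lpen (A := A) (b := b) (K := K) hχ ⟨x, hx⟩ hlsc μ y
  have hg : gmu A b K χ p μ y ≤ Lpen A b K p μ u y := by
    refine csInf_le ⟨Lpen A b K p μ u y, ?_⟩ ⟨u, hu, rfl⟩
    rintro _ ⟨v, hv, rfl⟩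
    exact isMinOn_iff.1 hmin v hv
  have h1 := hmin.Lpen_add_sq_le hne hcl hcv hp hμ hu hx
  have h2 : ‖multiplierUpdate A b K μ x y - multiplierUpdate A b K μ u y‖ ≤ √(2 * ξ * μ) := by
    refine Real.le_sqrt_of_sq_le ?_
    have h3 : ‖multiplierUpdate A b K μ x y - multiplierUpdate A b K μ u y‖ ^ 2 / (2 * μ) ≤ ξ := by
      linarith
    rw [div_le_iff₀ (by positivity)] at h3
    linarith
  have h3 := hmin.norm_multiplierUpdate_sub_le hne hcl hcv hcone hχ hp hlsc hfeas hz hμ hu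
  exact (norm_sub_le_norm_sub_add_norm_sub _ _ _).trans (add_le_add h2 h3)

end Lagrangian

/-- Boundedness of the dual iterates of the inexact augmented Lagrangian method. Only the values
of the objective `p` on `χ` matter; it is assumed convex and lower semicontinuous there, which
covers every closed convex extended-valued objective whose domain contains `χ`, and in particular
every finite convex function on the whole space. -/
theorem stmt_16 {n m : ℕ} (K : Set (EuclideanSpace ℝ (Fin m)))
    (hKne : K.Nonempty) (hKcl : IsClosed K) (hKcv : Convex ℝ K)
    (hKcone : ∀ c : ℝ, 0 < c → ∀ s ∈ K, c • s ∈ K)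
    (A : EuclideanSpace ℝ (Fin n) →ₗ[ℝ] EuclideanSpace ℝ (Fin m))
    (b : EuclideanSpace ℝ (Fin m))
    (χ : Set (EuclideanSpace ℝ (Fin n)))
    (hχcp : IsCompact χ) (hχcv : Convex ℝ χ)
    (p : EuclideanSpace ℝ (Fin n) → ℝ)
    (hp : ConvexOn ℝ χ p) (hplsc : LowerSemicontinuousOn p χ)
    (hfeas : {x ∈ χ | A x - b ∈ K}.Nonempty)
    (ystar : EuclideanSpace ℝ (Fin m)) (hystar : IsKKTPoint A b K χ p ystar)
    (μ : ℕ → ℝ) (ξ : ℕ → ℝ)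
    (hμ : ∀ k, 1 ≤ k → 0 < μ k) (hξ : ∀ k, 1 ≤ k → 0 ≤ ξ k)
    (hsum : Summable (fun k : ℕ => Real.sqrt (2 * ξ (k + 1) * μ (k + 1))))
    (x : ℕ → EuclideanSpace ℝ (Fin n)) (hx : ∀ k, 1 ≤ k → x k ∈ χ)
    (y : ℕ → EuclideanSpace ℝ (Fin m)) (hy1 : y 1 = 0)
    (hyrec : ∀ k, 1 ≤ k → y (k + 1)
      = μ k • (projK K (A (x k) - b - (μ k)⁻¹ • y k) - (A (x k) - b - (μ k)⁻¹ • y k)))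
    (hL : ∀ k, 1 ≤ k →
      Lpen A b K p (μ k) (x k) (y k) ≤ gmu A b K χ p (μ k) (y k) + ξ k) :
    ∀ k, 1 ≤ k →
      ‖y k - ystar‖ ≤ (∑' j : ℕ, Real.sqrt (2 * ξ (j + 1) * μ (j + 1))) + ‖ystar‖ ∧
      ‖y k‖ ≤ (∑' j : ℕ, Real.sqrt (2 * ξ (j + 1) * μ (j + 1))) + 2 * ‖ystar‖ := by
  have hpartial : ∀ k : ℕ, ‖y (k + 1) - ystar‖
      ≤ (∑ j ∈ Finset.range k, Real.sqrt (2 * ξ (j + 1) * μ (j + 1))) + ‖ystar‖ := by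
    intro k
    induction k with
    | zero => simp [hy1]
    | succ k ih =>
      have hk : 1 ≤ k + 1 := Nat.le_add_left 1 k
      have h := norm_multiplierUpdate_sub_le_add_sqrt hKne hKcl hKcv hKcone hχcp hp hplsc hfeas
        hystar (hμ _ hk) (hx _ hk) (hL _ hk)
      rw [multiplierUpdate, ← hyrec _ hk] at h
      rw [Finset.sum_range_succ]
      linarith
  intro k hk
  obtain ⟨j, rfl⟩ := Nat.exists_eq_add_of_le' hk
  have hbound : ‖y (j + 1) - ystar‖
      ≤ (∑' j : ℕ, Real.sqrt (2 * ξ (j + 1) * μ (j + 1))) + ‖ystar‖ := by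
    have := hsum.sum_le_tsum (Finset.range j) fun i _ => Real.sqrt_nonneg _
    linarith [hpartial j]
  refine ⟨hbound, ?_⟩
  have htri := norm_add_le (y (j + 1) - ystar) ystar
  rw [sub_add_cancel] at htri
  linarith
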